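/- arXiv:2505.15749 — 2 statements merged into one kernel-verified Lean document; each statement's English description precedes it below -/
import Mathlib

section
/- Let X ⊂ P^n be an irreducible hypersurface over ℂ of degree d, and let S ⊂ X be an irreducible subvariety with dim S ≥ d. Then through a general point p of X there passes a line contained in X meeting S; that is, the family of lines through points of S which are d-fold tangent to X at those points dominates X. -/
open MvPolynomial

noncomputable section

/-- Complex projective `n`-space, as the projectivization of `ℂ^{n+1}`. -/
abbrev Pn (n : ℕ) := Projectivization ℂ (Fin (n + 1) → ℂ)

/-- The common zero locus in `ℙ^n` of a set of polynomials: the points all of whose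
homogeneous representatives are zeros of every polynomial in the set. -/
def algZeroLocus (n : ℕ) (F : Set (MvPolynomial (Fin (n + 1)) ℂ)) : Set (Pn n) :=
  {p | ∀ f ∈ F, ∀ v : Fin (n + 1) → ℂ, v ∈ Projectivization.submodule p → eval v f = 0}

/-- A subset of `ℙ^n` is (Zariski-)closed if it is the common zero locus of a set of
polynomials. -/
def IsAlgClosedSet (n : ℕ) (S : Set (Pn n)) : Prop :=
  ∃ F, S = algZeroLocus n F

/-- A subset of `ℙ^n` is an irreducible variety if it is nonempty and cannot be covered by
two closed sets without being contained in one of them. -/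
def IsIrrVariety (n : ℕ) (S : Set (Pn n)) : Prop :=
  S.Nonempty ∧ ∀ C₁ C₂ : Set (Pn n), IsAlgClosedSet n C₁ → IsAlgClosedSet n C₂ →
    S ⊆ C₁ ∪ C₂ → S ⊆ C₁ ∨ S ⊆ C₂

/-- The dimension of a subset of `ℙ^n`: the supremum of lengths of strictly increasing chains
of irreducible closed subvarieties contained in it. -/
def algDim (n : ℕ) (S : Set (Pn n)) : ℕ∞ :=
  sSup {m : ℕ∞ | ∃ k : ℕ, m = (k : ℕ∞) ∧ ∃ c : Fin (k + 1) → Set (Pn n),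
    StrictMono c ∧ ∀ i, IsAlgClosedSet n (c i) ∧ IsIrrVariety n (c i) ∧ c i ⊆ S}

/-- The projective line (or point) spanned by two points of `ℙ^n`. -/
def lineThrough (n : ℕ) (p q : Pn n) : Set (Pn n) :=
  {x | Projectivization.submodule x ≤ Projectivization.submodule p ⊔ Projectivization.submodule q}

/-- A line in `ℙ^n`: the projectivization of a 2-dimensional linear subspace. -/
def IsLine (n : ℕ) (l : Set (Pn n)) : Prop :=
  ∃ W : Submodule ℂ (Fin (n + 1) → ℂ), Module.finrank ℂ W = 2 ∧
    l = {x | Projectivization.submodule x ≤ W}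

/-- The linear span in `ℙ^n` of an effective divisor (a multiset of points). -/
def linSpan (n : ℕ) (D : Multiset (Pn n)) : Set (Pn n) :=
  {x | Projectivization.submodule x ≤
    Submodule.span ℂ (⋃ p ∈ {p : Pn n | p ∈ D}, (Projectivization.submodule p : Set (Fin (n + 1) → ℂ)))}

/-- The `r`-th secant variety of a subset `C` of `ℙ^n`: the union of the linear spans of all
effective divisors of degree `r` supported on `C`. -/
def secantVariety (n : ℕ) (r : ℕ) (C : Set (Pn n)) : Set (Pn n) :=
  ⋃ D ∈ {D : Multiset (Pn n) | Multiset.card D = r ∧ ∀ p ∈ D, p ∈ C}, linSpan n D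

end

noncomputable section

/-- Krull's height theorem, for a chain of primes in a Noetherian ring. -/
lemma krull_chain {R : Type*} [CommRing R] [IsNoetherianRing R] (k d : ℕ)
    (q : Fin (k + 1) → Ideal R) (hq : ∀ i, (q i).IsPrime) (hanti : StrictAnti q)
    (m : Ideal R) (hm : m.IsPrime) (h0 : q 0 < m) (f : Fin d → R) (hf : ∀ i, f i ∈ m)
    (hmin : ∀ Q : Ideal R, Q.IsPrime → q (Fin.last k) ≤ Q → (∀ i, f i ∈ Q) → m ≤ Q) :
    k + 1 ≤ d := by
  classical
  set I := q (Fin.last k) with hI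
  have hle : ∀ i, I ≤ q i := fun i => hanti.antitone (Fin.le_last i)
  have hprime : ∀ J : Ideal R, J.IsPrime → I ≤ J → (J.map (Ideal.Quotient.mk I)).IsPrime := by
    intro J hJ hIJ
    refine Ideal.map_isPrime_of_surjective Ideal.Quotient.mk_surjective ?_
    rwa [Ideal.mk_ker]
  have hlt : ∀ J J' : Ideal R, I ≤ J → I ≤ J' → J < J' →
      J.map (Ideal.Quotient.mk I) < J'.map (Ideal.Quotient.mk I) := by
    intro J J' h1 h2 h
    refine lt_of_le_of_ne (Ideal.map_mono h.le) fun he => h.ne ?_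
    rw [← Ideal.comap_map_mk h1, he, Ideal.comap_map_mk h2]
  have hIm : I ≤ m := (hle 0).trans h0.le
  let pt : Fin (k + 1) → PrimeSpectrum (R ⧸ I) := fun i =>
    ⟨(q i.rev).map (Ideal.Quotient.mk I), hprime _ (hq _) (hle _)⟩
  have hpt : StrictMono pt := by
    intro i j hij
    exact hlt _ _ (hle _) (hle _) (hanti (Fin.rev_lt_rev.2 hij))
  let M : PrimeSpectrum (R ⧸ I) := ⟨m.map (Ideal.Quotient.mk I), hprime _ hm hIm⟩
  let s : LTSeries (PrimeSpectrum (R ⧸ I)) := LTSeries.mk k pt hpt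
  have hs : (k : ℕ∞) ≤ Order.height s.last := Order.length_le_height_last (p := s)
  have hsM : s.last < M := by
    refine hlt _ _ (hle _) hIm ?_
    convert h0 using 2
    exact Fin.rev_last k
  have h1 : ((k + 1 : ℕ) : ℕ∞) ≤ M.asIdeal.height := by
    rw [PrimeSpectrum.height_eq_orderHeight]
    push_cast
    exact (add_le_add_left hs 1).trans (Order.height_add_one_le hsM)
  let t : Finset (R ⧸ I) := Finset.univ.image fun i => Ideal.Quotient.mk I (f i)
  have h2 : M.asIdeal ∈ (Ideal.span (t : Set (R ⧸ I))).minimalPrimes := by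
    refine ⟨⟨M.isPrime, ?_⟩, ?_⟩
    · rw [Ideal.span_le]
      intro x hx
      simp only [t, Finset.coe_image, Finset.coe_univ, Set.image_univ, Set.mem_range] at hx
      obtain ⟨i, rfl⟩ := hx
      exact Ideal.mem_map_of_mem _ (hf i)
    · rintro Q ⟨hQ, hQt⟩ -
      rw [Ideal.span_le] at hQt
      refine Ideal.map_le_iff_le_comap.2 (hmin _ (Ideal.IsPrime.comap _) ?_ ?_)
      · intro x hx
        rw [Ideal.mem_comap, Ideal.Quotient.eq_zero_iff_mem.2 hx]
        exact Q.zero_mem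
      · intro i
        exact hQt (by simp [t])
  have h3 := Ideal.height_le_card_of_mem_minimalPrimes_span_finset h2
  have h4 : t.card ≤ d := by
    simpa using (Finset.card_image_le (s := Finset.univ)
      (f := fun i => Ideal.Quotient.mk I (f i)))
  have h5 : ((k + 1 : ℕ) : ℕ∞) ≤ (t.card : ℕ∞) := h1.trans h3
  have h6 : k + 1 ≤ t.card := by exact_mod_cast h5
  omega

/-- The restriction of a polynomial to an affine line. -/
def linePoly {n : ℕ} (z u : Fin (n + 1) → ℂ) (F : MvPolynomial (Fin (n + 1)) ℂ) :
    Polynomial ℂ :=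
  MvPolynomial.aeval (fun j => Polynomial.C (z j) + Polynomial.C (u j) * Polynomial.X) F

lemma eval_linePoly {n : ℕ} (z u : Fin (n + 1) → ℂ) (F : MvPolynomial (Fin (n + 1)) ℂ) (t : ℂ) :
    (linePoly z u F).eval t = eval (z + t • u) F := by
  induction F using MvPolynomial.induction_on with
  | C a => simp [linePoly]
  | add p q hp hq => simp_all [linePoly]
  | mul_X p j hp =>
    simp only [linePoly, map_mul, aeval_X, Polynomial.eval_mul, eval_X] at hp ⊢
    rw [hp]
    congr 1
    rw [Polynomial.eval_add, Polynomial.eval_mul, Polynomial.eval_C, Polynomial.eval_C,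
      Polynomial.eval_X, Pi.add_apply, Pi.smul_apply, smul_eq_mul, mul_comm t]

/-- The ideal of the affine cone over a subset of projective space. -/
def coneIdeal {n : ℕ} (c : Set (Pn n)) : Ideal (MvPolynomial (Fin (n + 1)) ℂ) where
  carrier := {f | ∀ p ∈ c, ∀ v ∈ Projectivization.submodule p, eval v f = 0}
  zero_mem' := by intro p _ v _; simp
  add_mem' := by
    intro a b ha hb p hp v hv
    simp [ha p hp v hv, hb p hp v hv]
  smul_mem' := by
    intro a b hb p hp v hv
    simp [hb p hp v hv]

lemma mem_coneIdeal {n : ℕ} {c : Set (Pn n)} {f : MvPolynomial (Fin (n + 1)) ℂ} :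
    f ∈ coneIdeal c ↔ ∀ p ∈ c, ∀ v ∈ Projectivization.submodule p, eval v f = 0 := Iff.rfl

lemma coneIdeal_anti {n : ℕ} {c c' : Set (Pn n)} (h : c ⊆ c') : coneIdeal c' ≤ coneIdeal c :=
  fun _ hf p hp => hf p (h hp)

lemma algZeroLocus_coneIdeal {n : ℕ} {c : Set (Pn n)} (hc : IsAlgClosedSet n c) :
    algZeroLocus n (coneIdeal c : Set (MvPolynomial (Fin (n + 1)) ℂ)) = c := by
  obtain ⟨G, rfl⟩ := hc
  ext p
  constructor
  · intro h f hf
    exact h f (fun q hq => hq f hf)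
  · intro h f hf
    exact hf p h

lemma coneIdeal_prime {n : ℕ} {c : Set (Pn n)} (hc : IsIrrVariety n c) :
    (coneIdeal c).IsPrime := by
  obtain ⟨⟨p, hp⟩, hirr⟩ := hc
  refine ⟨?_, ?_⟩
  · intro h
    have h1 : (1 : MvPolynomial (Fin (n + 1)) ℂ) ∈ coneIdeal c := h ▸ Submodule.mem_top
    simpa using h1 p hp 0 (Submodule.zero_mem _)
  · intro f g hfg
    have := hirr (algZeroLocus n {f}) (algZeroLocus n {g}) ⟨_, rfl⟩ ⟨_, rfl⟩ ?_
    · rcases this with h | h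
      · left
        intro q hq v hv
        exact h hq f rfl v hv
      · right
        intro q hq v hv
        exact h hq g rfl v hv
    · intro q hq
      have key : linePoly 0 q.rep (f * g) = 0 := by
        refine Polynomial.funext fun t => ?_
        rw [eval_linePoly]
        simp only [Polynomial.eval_zero]
        refine hfg q hq _ ?_
        rw [Projectivization.submodule_eq, zero_add]
        exact Submodule.smul_mem _ _ (Submodule.mem_span_singleton_self _)
      have hmul : linePoly 0 q.rep f * linePoly 0 q.rep g = 0 := by
        rw [← key]; simp [linePoly]
      have conv : ∀ h : MvPolynomial (Fin (n + 1)) ℂ, linePoly 0 q.rep h = 0 →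
          q ∈ algZeroLocus n {h} := by
        intro h hh f' hf' v hv
        rw [Set.mem_singleton_iff] at hf'
        subst hf'
        rw [Projectivization.submodule_eq] at hv
        obtain ⟨t, rfl⟩ := Submodule.mem_span_singleton.1 hv
        have := eval_linePoly 0 q.rep f' t
        rw [hh] at this
        simpa using this.symm
      rcases mul_eq_zero.1 hmul with h | h
      · exact Or.inl (conv f h)
      · exact Or.inr (conv g h)

lemma mem_of_zero_coneIdeal {n : ℕ} {c : Set (Pn n)} (hc : IsAlgClosedSet n c)
    (v : Fin (n + 1) → ℂ) (hv : v ≠ 0) (h : ∀ f ∈ coneIdeal c, eval v f = 0) :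
    Projectivization.mk ℂ v hv ∈ c := by
  rw [← algZeroLocus_coneIdeal hc]
  intro f hf w hw
  rw [Projectivization.submodule_mk] at hw
  obtain ⟨t, rfl⟩ := Submodule.mem_span_singleton.1 hw
  have hev : ∀ w : Fin (n + 1) → ℂ,
      eval w (MvPolynomial.bind₁ (fun j => C t * X j) f) = eval (t • w) f := by
    intro w
    rw [MvPolynomial.eval, MvPolynomial.eval₂Hom_bind₁]
    congr 2
    ext j
    simp
  rw [← hev]
  refine h _ ?_
  intro p hp w hw
  rw [hev]
  exact hf p hp _ (Submodule.smul_mem _ _ hw)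

/-- Projective dimension theorem: a closed set of dimension at least `d` meets the common
zero set of `d` polynomials without constant term in the affine cone. -/
lemma exists_common_zero {n d : ℕ} (hd : 1 ≤ d) {S : Set (Pn n)}
    (hSdim : (d : ℕ∞) ≤ algDim n S) (f : Fin d → MvPolynomial (Fin (n + 1)) ℂ)
    (hf0 : ∀ i, eval 0 (f i) = 0) :
    ∃ (v : Fin (n + 1) → ℂ) (hv : v ≠ 0), Projectivization.mk ℂ v hv ∈ S ∧
      ∀ i, eval v (f i) = 0 := by
  by_contra hcon
  push Not at hcon
  have hk : ∃ k : ℕ, d ≤ k ∧ ∃ c : Fin (k + 1) → Set (Pn n),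
      StrictMono c ∧ ∀ i, IsAlgClosedSet n (c i) ∧ IsIrrVariety n (c i) ∧ c i ⊆ S := by
    by_contra hno
    push Not at hno
    have : algDim n S ≤ ((d - 1 : ℕ) : ℕ∞) := by
      refine sSup_le ?_
      rintro m ⟨k, rfl, c, hc, hc'⟩
      have hkd : k < d := by
        by_contra hkd
        obtain ⟨i, hi⟩ := hno k (not_lt.1 hkd) c hc
        exact hi (hc' i).1 (hc' i).2.1 (hc' i).2.2
      exact_mod_cast (by omega : k ≤ d - 1)
    have h2 := hSdim.trans this
    have h3 : d ≤ d - 1 := by exact_mod_cast h2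
    omega
  obtain ⟨k, hdk, c, hc, hc'⟩ := hk
  let m : Ideal (MvPolynomial (Fin (n + 1)) ℂ) := RingHom.ker (eval (0 : Fin (n + 1) → ℂ))
  have hm : m.IsPrime := RingHom.ker_isPrime _
  have hres := krull_chain k d (fun i => coneIdeal (c i)) (fun i => coneIdeal_prime (hc' i).2.1)
    ?_ m hm ?_ f (fun i => hf0 i) ?_
  · omega
  · intro i j hij
    refine lt_of_le_of_ne (coneIdeal_anti (hc hij).le) fun he => (hc hij).ne ?_
    rw [← algZeroLocus_coneIdeal (hc' i).1, ← algZeroLocus_coneIdeal (hc' j).1]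
    simp only at he
    rw [he]
  · obtain ⟨p, hp⟩ := (hc' 0).2.1.1
    refine lt_of_le_of_ne (fun g hg => hg p hp 0 (Submodule.zero_mem _)) fun he => ?_
    refine p.rep_nonzero (funext fun j => ?_)
    have hX : (X j : MvPolynomial (Fin (n + 1)) ℂ) ∈ coneIdeal (c 0) := by
      rw [he]
      simp [m, RingHom.mem_ker]
    have := hX p hp p.rep (by
      rw [Projectivization.submodule_eq]; exact Submodule.mem_span_singleton_self _)
    simpa using this
  · intro Q hQ hcQ hfQ
    rw [← MvPolynomial.IsPrime.vanishingIdeal_zeroLocus (K := ℂ) Q]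
    intro g hg v hv
    by_cases hv0 : v = 0
    · subst hv0
      rw [MvPolynomial.aeval_eq_eval]
      exact hg
    · exfalso
      have hv' : ∀ g ∈ Q, eval v g = 0 := by
        intro g hg
        simpa [MvPolynomial.aeval_eq_eval] using hv g hg
      have hmem := mem_of_zero_coneIdeal (hc' (Fin.last k)).1 v hv0 (fun g hg => hv' g (hcQ hg))
      obtain ⟨i, hi⟩ := hcon v hv0 ((hc' _).2.2 hmem)
      exact hi (hv' _ (hfQ i))

lemma eval_smul_homog {n d : ℕ} {F : MvPolynomial (Fin (n + 1)) ℂ} (hF : F.IsHomogeneous d)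
    (t : ℂ) (v : Fin (n + 1) → ℂ) : eval (t • v) F = t ^ d * eval v F := by
  rw [MvPolynomial.eval_eq', MvPolynomial.eval_eq', Finset.mul_sum]
  refine Finset.sum_congr rfl fun m hm => ?_
  have h1 := hF (MvPolynomial.mem_support_iff.1 hm)
  have h1 : ∑ i, m i = d := by
    rw [← Finsupp.degree_eq_sum, Finsupp.degree_eq_weight_one]
    exact h1
  simp only [Pi.smul_apply, smul_eq_mul, mul_pow, Finset.prod_mul_distrib,
    Finset.prod_pow_eq_pow_sum]
  rw [h1]
  ring

lemma natDegree_linePoly {n d : ℕ} {F : MvPolynomial (Fin (n + 1)) ℂ} (hF : F.IsHomogeneous d)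
    (z u : Fin (n + 1) → ℂ) : (linePoly z u F).natDegree ≤ d := by
  have := MvPolynomial.aeval_natDegree_le (m := d) (n := 1) F hF.totalDegree_le
    (fun j => Polynomial.C (z j) + Polynomial.C (u j) * Polynomial.X) (fun j => by compute_degree)
  simpa [linePoly] using this

/-- A form of degree `d` vanishing at `z + i u` for `0 ≤ i < d` and at `u` vanishes on the
whole plane spanned by `z` and `u`. -/
lemma vanish_on_span {n d : ℕ} {F : MvPolynomial (Fin (n + 1)) ℂ} (hF : F.IsHomogeneous d)
    (z u : Fin (n + 1) → ℂ) (hu : eval u F = 0)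
    (hz : ∀ i < d, eval (z + (i : ℂ) • u) F = 0) (s t : ℂ) : eval (s • z + t • u) F = 0 := by
  set P := linePoly z u F with hP
  have hdeg : P.natDegree ≤ d := natDegree_linePoly hF z u
  have hrefl : P.reflect d = linePoly u z F := by
    refine Polynomial.eq_of_infinite_eval_eq _ _ ?_
    refine Set.Infinite.mono (s := {0}ᶜ) ?_ (Set.finite_singleton (0 : ℂ)).infinite_compl
    intro x hx
    have hx0 : x ≠ 0 := hx
    let _ := invertibleOfNonzero (inv_ne_zero hx0)
    have h := Polynomial.eval₂_reflect_mul_pow (RingHom.id ℂ) x⁻¹ d P hdeg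
    simp only [invOf_eq_inv, inv_inv, Polynomial.eval₂_id] at h
    rw [eval_linePoly] at h
    have h2 : u + x • z = x • (z + x⁻¹ • u) := by
      rw [smul_add, smul_smul, mul_inv_cancel₀ hx0, one_smul]
      exact add_comm _ _
    show Polynomial.eval x _ = Polynomial.eval x _
    rw [eval_linePoly, h2, eval_smul_homog hF, ← h, inv_pow]
    field_simp
  have hcoeff : P.coeff d = 0 := by
    have h1 : (P.reflect d).coeff 0 = 0 := by
      rw [hrefl, Polynomial.coeff_zero_eq_eval_zero, eval_linePoly]
      simpa using hu
    rw [Polynomial.coeff_reflect] at h1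
    simpa using h1
  have hP0 : P = 0 := by
    by_contra hne
    have hlt : P.natDegree < d := by
      refine lt_of_le_of_ne hdeg fun he => hne ?_
      rw [← Polynomial.leadingCoeff_eq_zero, Polynomial.leadingCoeff, he, hcoeff]
    refine hne (Polynomial.eq_zero_of_natDegree_lt_card_of_eval_eq_zero' P
      ((Finset.range d).image (fun i : ℕ => (i : ℂ))) ?_ ?_)
    · intro x hx
      obtain ⟨i, hi, rfl⟩ := Finset.mem_image.1 hx
      rw [eval_linePoly]
      exact hz i (Finset.mem_range.1 hi)
    · rw [Finset.card_image_of_injective _ Nat.cast_injective, Finset.card_range]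
      exact hlt
  by_cases hs : s = 0
  · subst hs
    rw [zero_smul, zero_add, eval_smul_homog hF, hu, mul_zero]
  · have h2 : s • z + t • u = s • (z + (s⁻¹ * t) • u) := by
      rw [smul_add, smul_smul, mul_inv_cancel_left₀ hs]
    rw [h2, eval_smul_homog hF, ← eval_linePoly, ← hP, hP0]
    simp

end

/-- Let `X ⊂ ℙ^n` be an irreducible hypersurface of degree `d` over `ℂ` and `S ⊆ X` an
irreducible closed subvariety with `dim S ≥ d`. Then through a general point `p` of `X`
(all points outside a closed subset not containing `X`) there passes a line contained in `X`
meeting `S` at a point `z ≠ p`. -/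
theorem stmt9 (n d : ℕ) (hd : 1 ≤ d) (F : MvPolynomial (Fin (n + 1)) ℂ)
    (hF : F.IsHomogeneous d) (hF0 : F ≠ 0)
    (X : Set (Pn n)) (hX : X = algZeroLocus n {F}) (hXirr : IsIrrVariety n X)
    (S : Set (Pn n)) (hS : S ⊆ X) (hScl : IsAlgClosedSet n S) (hSirr : IsIrrVariety n S)
    (hSdim : (d : ℕ∞) ≤ algDim n S) :
    ∃ Z : Set (Pn n), IsAlgClosedSet n Z ∧ ¬ X ⊆ Z ∧
      ∀ p ∈ X \ Z, ∃ z ∈ S, z ≠ p ∧ lineThrough n z p ⊆ X := by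
  subst hX
  refine ⟨∅, ⟨{1}, ?_⟩, ?_, ?_⟩
  · ext p
    simp only [Set.mem_empty_iff_false, false_iff]
    intro h
    simpa using h 1 rfl 0 (Submodule.zero_mem _)
  · intro h
    obtain ⟨p, hp⟩ := hXirr.1
    exact h hp
  · rintro p ⟨hp, -⟩
    set u := p.rep with hu
    have hup : u ∈ p.submodule := by
      rw [Projectivization.submodule_eq]; exact Submodule.mem_span_singleton_self _
    have hFu : ∀ t : ℂ, eval (t • u) F = 0 := fun t =>
      hp F rfl _ (Submodule.smul_mem _ _ hup)
    obtain ⟨j, hj⟩ : ∃ j, u j ≠ 0 := by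
      by_contra hno
      push Not at hno
      exact p.rep_nonzero (funext hno)
    have hev : ∀ (i : ℕ) (w : Fin (n + 1) → ℂ),
        eval w (MvPolynomial.bind₁ (fun l => X l + C ((i : ℂ) * u l)) F)
          = eval (w + (i : ℂ) • u) F := by
      intro i w
      rw [MvPolynomial.eval, MvPolynomial.eval₂Hom_bind₁]
      congr 2
      ext l
      simp
    obtain ⟨v, hv, hvS, hvf⟩ := exists_common_zero hd hSdim
      (fun i => if (i : ℕ) = 0 then X j else
        MvPolynomial.bind₁ (fun l => X l + C (((i : ℕ) : ℂ) * u l)) F) (by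
        intro i
        split_ifs
        · simp
        · rw [hev, zero_add]; exact hFu _)
    have hFv : eval v F = 0 := hS hvS F rfl v (by
      rw [Projectivization.submodule_mk]; exact Submodule.mem_span_singleton_self _)
    refine ⟨_, hvS, ?_, ?_⟩
    · intro he
      have hvp : v ∈ p.submodule := by
        rw [← he, Projectivization.submodule_mk]; exact Submodule.mem_span_singleton_self _
      rw [Projectivization.submodule_eq] at hvp
      obtain ⟨a, rfl⟩ := Submodule.mem_span_singleton.1 hvp
      have h0 := hvf ⟨0, hd⟩
      simp only [if_true, eval_X, Pi.smul_apply, smul_eq_mul] at h0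
      rcases mul_eq_zero.1 h0 with h | h
      · exact hv (by rw [h, zero_smul])
      · exact hj h
    · intro x hx f hf w hw
      rw [Set.mem_singleton_iff] at hf
      subst hf
      have hw' := hx hw
      rw [Projectivization.submodule_mk, Projectivization.submodule_eq p] at hw'
      obtain ⟨a, ha, b, hb, rfl⟩ := Submodule.mem_sup.1 hw'
      obtain ⟨s, rfl⟩ := Submodule.mem_span_singleton.1 ha
      obtain ⟨t, rfl⟩ := Submodule.mem_span_singleton.1 hb
      refine vanish_on_span hF v u (by simpa using hFu 1) ?_ s t
      intro i hi
      by_cases h0 : i = 0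
      · subst h0; simpa using hFv
      · have := hvf ⟨i, hi⟩
        simp only [if_neg h0] at this
        rwa [hev] at this
end

section
/- Let X ⊂ P^n be an irreducible hypersurface over ℂ of degree d, and let S ⊂ X be an irreducible subvariety with dim S = 2d - 1. Then for any two distinct points p, q ∈ X there exists a point z ∈ S, z ≠ p, z ≠ q, such that both lines l_{zp} and l_{zq} (joining z to p and to q) are contained in X. -/
open MvPolynomial

lemma krull_chain_s10 {R : Type*} [CommRing R] [IsNoetherianRing R] (M : Ideal R) [hM : M.IsPrime]
    (s : Set R) (hs : s.Finite) (k : ℕ) (c : Fin (k + 1) → Ideal R) (hc : StrictAnti c)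
    (hp : ∀ i, (c i).IsPrime) (h0 : c 0 < M)
    (hmin : M ∈ (c (Fin.last k) ⊔ Ideal.span s).minimalPrimes) : k + 1 ≤ s.ncard := by
  set I := c (Fin.last k) with hI
  let f := Ideal.Quotient.mk I
  have hsurj : Function.Surjective f := Ideal.Quotient.mk_surjective
  have hle : ∀ i, I ≤ c i := fun i => hc.antitone (Fin.le_last i)
  have hprime : ∀ J : Ideal R, J.IsPrime → I ≤ J → (J.map f).IsPrime := fun J hJ h =>
    Ideal.isPrime_map_quotientMk_of_isPrime h
  have hlt : ∀ J K : Ideal R, I ≤ J → J < K → J.map f < K.map f := by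
    intro J K hJ hJK
    refine lt_of_le_of_ne (Ideal.map_mono hJK.le) fun h => hJK.ne ?_
    have := congrArg (Ideal.comap f) h
    rwa [Ideal.comap_map_of_surjective' f hsurj, Ideal.comap_map_of_surjective' f hsurj,
      Ideal.mk_ker, sup_eq_left.2 hJ, sup_eq_left.2 (hJ.trans hJK.le)] at this
  have key : ∀ i : ℕ, ∀ h : i ≤ k, (i : ℕ∞) ≤ ((c ⟨k - i, by omega⟩).map f).height := by
    intro i
    induction i with
    | zero => intro; simp
    | succ i ih =>
      intro h
      have h1 := ih (by omega)
      have := hprime _ (hp ⟨k - i, by omega⟩) (hle _)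
      have := hprime _ (hp ⟨k - (i+1), by omega⟩) (hle _)
      have h2 := Ideal.height_add_one_le_of_lt_of_isPrime
        (hlt _ _ (hle _) (hc (show (⟨k - (i+1), _⟩ : Fin (k+1)) < ⟨k - i, _⟩ from
          Fin.mk_lt_mk.2 (by omega))))
      refine le_trans ?_ h2
      push_cast
      gcongr
  have hk := key k le_rfl
  have h00 : (⟨k - k, by omega⟩ : Fin (k+1)) = 0 := by ext; simp
  rw [h00] at hk
  have := hprime _ (hp 0) (hle _)
  have hMp := hprime M hM ((hle 0).trans h0.le)
  have h2 := Ideal.height_add_one_le_of_lt_of_isPrime (hlt _ _ (hle 0) h0)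
  have h3 : M.map f ∈ (Ideal.span (f '' s)).minimalPrimes := by
    refine ⟨⟨hMp, ?_⟩, ?_⟩
    · rw [← Ideal.map_span]
      exact Ideal.map_mono (le_sup_right.trans hmin.1.2)
    · rintro J ⟨hJ, hJs⟩ hJM
      rw [Ideal.map_le_iff_le_comap]
      refine hmin.2 ⟨Ideal.comap_isPrime f J, sup_le ?_ ?_⟩ ?_
      · intro x hx
        have : f x = 0 := Ideal.Quotient.eq_zero_iff_mem.2 hx
        simp [Ideal.mem_comap, this]
      · rw [← Ideal.map_le_iff_le_comap, Ideal.map_span]; exact hJs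
      · refine (Ideal.comap_mono hJM).trans ?_
        rw [Ideal.comap_map_of_surjective' f hsurj, Ideal.mk_ker, sup_eq_left.2 ((hle 0).trans h0.le)]
  have h4 := Ideal.height_le_card_of_mem_minimalPrimes_span (hs.image f) h3
  have h5 : ((k + 1 : ℕ) : ℕ∞) ≤ ((f '' s).ncard : ℕ∞) := by
    push_cast
    exact le_trans (by gcongr) (h2.trans h4)
  exact (Nat.cast_le.1 h5).trans (Set.ncard_image_le hs)

/-- The polynomial `T ↦ F(x + T p)`. -/
noncomputable def polarG {n : ℕ} (F : MvPolynomial (Fin (n + 1)) ℂ) (p : Fin (n + 1) → ℂ) :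
    Polynomial (MvPolynomial (Fin (n + 1)) ℂ) :=
  aeval (fun i => Polynomial.C (X i) + Polynomial.X * Polynomial.C (C (p i))) F

lemma polarG_eval {n : ℕ} (F : MvPolynomial (Fin (n + 1)) ℂ) (p v : Fin (n + 1) → ℂ) (t : ℂ) :
    ((polarG F p).map (eval v)).eval t = eval (v + t • p) F := by
  unfold polarG
  induction F using MvPolynomial.induction_on with
  | C a => simp [Polynomial.algebraMap_apply]
  | add f g hf hg => simp only [map_add, Polynomial.map_add, Polynomial.eval_add, hf, hg]
  | mul_X f i hf =>
    simp only [map_mul, Polynomial.map_mul, Polynomial.eval_mul, hf]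
    simp [mul_comm t]

lemma polarG_natDegree {n d : ℕ} (F : MvPolynomial (Fin (n + 1)) ℂ) (hF : F.IsHomogeneous d)
    (p v : Fin (n + 1) → ℂ) : ((polarG F p).map (eval v)).natDegree ≤ d := by
  have h : (polarG F p).map (eval v) =
      aeval (fun i => Polynomial.C (v i) + Polynomial.X * Polynomial.C (p i)) F := by
    clear hF
    unfold polarG
    induction F using MvPolynomial.induction_on with
    | C a => simp [Polynomial.algebraMap_apply]
    | add f g hf hg => simp only [map_add, Polynomial.map_add, hf, hg]
    | mul_X f i hf =>
      simp only [map_mul, Polynomial.map_mul, hf]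
      simp
  rw [h]
  have := MvPolynomial.aeval_natDegree_le (m := d) (n := 1) F hF.totalDegree_le
    (fun i => Polynomial.C (v i) + Polynomial.X * Polynomial.C (p i)) (fun i => by
      compute_degree)
  simpa using this

lemma eval_smul_hom {n d : ℕ} (F : MvPolynomial (Fin (n + 1)) ℂ) (hF : F.IsHomogeneous d)
    (v : Fin (n + 1) → ℂ) (a : ℂ) : eval (a • v) F = a ^ d * eval v F := by
  rw [eval_eq, eval_eq, Finset.mul_sum]
  refine Finset.sum_congr rfl fun m hm => ?_
  have h := hF (mem_support_iff.1 hm)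
  simp only [Pi.smul_apply, smul_eq_mul, mul_pow, Finset.prod_mul_distrib, Finset.prod_pow_eq_pow_sum]
  have : ∑ i ∈ m.support, m i = d := by
    rw [← h, Finsupp.weight_apply]; simp [Finsupp.sum]
  rw [this]; ring

lemma polar_zero {n d : ℕ} (F : MvPolynomial (Fin (n + 1)) ℂ) (hF : F.IsHomogeneous d)
    (p : Fin (n + 1) → ℂ) (hp : eval p F = 0) (j : ℕ) : eval 0 ((polarG F p).coeff j) = 0 := by
  rw [← Polynomial.coeff_map]
  have : (polarG F p).map (eval 0) = 0 := by
    apply Polynomial.funext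
    intro t
    rw [polarG_eval, zero_add, eval_smul_hom F hF, hp]; simp
  rw [this]; simp

lemma polar_line {n d : ℕ} (F : MvPolynomial (Fin (n + 1)) ℂ) (hF : F.IsHomogeneous d)
    (p v : Fin (n + 1) → ℂ) (hp : eval p F = 0) (hv : eval v F = 0)
    (h : ∀ j, 1 ≤ j → j < d → eval v ((polarG F p).coeff j) = 0) (a b : ℂ) :
    eval (a • v + b • p) F = 0 := by
  set c := eval v ((polarG F p).coeff d) with hc
  have h1 : (polarG F p).map (eval v) = Polynomial.C c * Polynomial.X ^ d := by
    ext j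
    rw [Polynomial.coeff_map, Polynomial.coeff_C_mul_X_pow]
    split_ifs with hj
    · rw [hj]
    · rcases Nat.eq_zero_or_pos j with rfl | hj0
      · rw [← Polynomial.coeff_map, Polynomial.coeff_zero_eq_eval_zero, polarG_eval]
        simpa using hv
      · rcases lt_or_gt_of_ne hj with h' | h'
        · exact h j hj0 h'
        · rw [← Polynomial.coeff_map, Polynomial.coeff_eq_zero_of_natDegree_lt
            ((polarG_natDegree F hF p v).trans_lt h')]
  have h2 : ∀ t, eval (v + t • p) F = c * t ^ d := by
    intro t; rw [← polarG_eval, h1]; simp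
  have h3 : ∀ s : ℂ, s ≠ 0 → eval (p + s • v) F = c := by
    intro s hs
    have : p + s • v = s • (v + s⁻¹ • p) := by
      rw [smul_add, smul_smul, mul_inv_cancel₀ hs, one_smul]; exact add_comm _ _
    rw [this, eval_smul_hom F hF, h2]
    rw [inv_pow]; field_simp
  have h4 : (polarG F v).map (eval p) = Polynomial.C c := by
    apply Polynomial.eq_of_infinite_eval_eq
    refine Set.Infinite.mono (s := {0}ᶜ) ?_ (Set.finite_singleton (0 : ℂ)).infinite_compl
    intro s hs
    simp only [Set.mem_ofPred_eq, polarG_eval, Polynomial.eval_C]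
    exact h3 s hs
  have h5 : c = 0 := by
    have := polarG_eval F v p 0
    rw [h4] at this
    simpa [hp] using this
  by_cases ha : a = 0
  · rw [ha, zero_smul, zero_add, eval_smul_hom F hF, hp, mul_zero]
  · have : a • v + b • p = a • (v + (a⁻¹ * b) • p) := by
      rw [smul_add, smul_smul, mul_inv_cancel_left₀ ha]
    rw [this, eval_smul_hom F hF, h2, h5]; simp

lemma exists_lin {n : ℕ} (p q : Fin (n + 1) → ℂ) (hp : p ≠ 0) (hq : q ≠ 0) :
    ∃ l : MvPolynomial (Fin (n + 1)) ℂ, l.IsHomogeneous 1 ∧ eval p l ≠ 0 ∧ eval q l ≠ 0 := by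
  obtain ⟨i, hi⟩ := Function.ne_iff.1 hp
  obtain ⟨j, hj⟩ := Function.ne_iff.1 hq
  by_cases h1 : q i = 0
  · by_cases h2 : p j = 0
    · exact ⟨X i + X j, (isHomogeneous_X _ _).add (isHomogeneous_X _ _), by simpa [h2] using hi,
        by simpa [h1] using hj⟩
    · exact ⟨X j, isHomogeneous_X _ _, by simpa using h2, by simpa using hj⟩
  · exact ⟨X i, isHomogeneous_X _ _, by simpa using hi, by simpa using h1⟩

lemma algZeroLocus_of_closed {n : ℕ} {S : Set (Pn n)} (hS : IsAlgClosedSet n S) (z : Pn n)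
    (h : ∀ f : MvPolynomial (Fin (n + 1)) ℂ,
      (∀ p ∈ S, ∀ v ∈ Projectivization.submodule p, eval v f = 0) →
      ∀ v ∈ Projectivization.submodule z, eval v f = 0) : z ∈ S := by
  obtain ⟨G, rfl⟩ := hS
  intro f hf
  exact h f fun p hp => hp f hf

/-- The affine cone over a subset of projective space. -/
def coneOf {n : ℕ} (S : Set (Pn n)) : Set (Fin (n + 1) → ℂ) :=
  {v | ∃ p ∈ S, v ∈ Projectivization.submodule p}

/-- The ideal of a subset of projective space. -/
noncomputable def idealOf {n : ℕ} (S : Set (Pn n)) : Ideal (MvPolynomial (Fin (n + 1)) ℂ) :=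
  vanishingIdeal ℂ (coneOf S)

lemma mem_idealOf {n : ℕ} {S : Set (Pn n)} {f : MvPolynomial (Fin (n + 1)) ℂ} :
    f ∈ idealOf S ↔ ∀ p ∈ S, ∀ v ∈ Projectivization.submodule p, eval v f = 0 := by
  unfold idealOf
  rw [mem_vanishingIdeal_iff]
  constructor
  · intro h p hp v hv
    simpa [aeval_eq_eval] using h v ⟨p, hp, hv⟩
  · rintro h v ⟨p, hp, hv⟩
    simpa [aeval_eq_eval] using h p hp v hv

lemma idealOf_strict {n : ℕ} {S T : Set (Pn n)} (hS : IsAlgClosedSet n S) (h : S < T) :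
    idealOf T < idealOf S := by
  refine lt_of_le_not_ge (fun f hf => ?_) fun hle => h.not_ge fun z hz => ?_
  · rw [mem_idealOf] at hf ⊢
    exact fun p hp => hf p (h.le hp)
  · refine algZeroLocus_of_closed hS z fun f hf => ?_
    exact mem_idealOf.1 (hle (mem_idealOf.2 hf)) z hz

lemma eval_scale {n : ℕ} (f : MvPolynomial (Fin (n + 1)) ℂ) (a : ℂ) (v : Fin (n + 1) → ℂ) :
    eval v (aeval (fun i => (C a * X i : MvPolynomial (Fin (n + 1)) ℂ)) f) = eval (a • v) f := by
  induction f using MvPolynomial.induction_on with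
  | C b => simp
  | add f g hf hg => simp only [map_add, hf, hg]
  | mul_X f i hf =>
    simp only [map_mul, hf]
    simp

lemma idealOf_scale {n : ℕ} {S : Set (Pn n)} {f : MvPolynomial (Fin (n + 1)) ℂ}
    (hf : f ∈ idealOf S) (a : ℂ) : aeval (fun i => C a * X i) f ∈ idealOf S := by
  rw [mem_idealOf] at hf ⊢
  intro p hp v hv
  have h := hf p hp (a • v) (Submodule.smul_mem _ _ hv)
  rw [eval_scale, h]

lemma eval_line {n : ℕ} (f : MvPolynomial (Fin (n + 1)) ℂ) (w : Fin (n + 1) → ℂ) (t : ℂ) :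
    ((polarG f w).map (eval 0)).eval t = eval (t • w) f := by
  rw [polarG_eval, zero_add]

lemma mem_locus_singleton {n : ℕ} (f : MvPolynomial (Fin (n + 1)) ℂ) (p : Pn n) :
    p ∈ algZeroLocus n {f} ↔ (polarG f p.rep).map (eval 0) = 0 := by
  constructor
  · intro h
    apply Polynomial.funext
    intro t
    rw [eval_line, Polynomial.eval_zero]
    refine h f rfl _ ?_
    rw [Projectivization.submodule_eq]
    exact Submodule.mem_span_singleton.2 ⟨t, rfl⟩
  · rintro h g rfl v hv
    rw [Projectivization.submodule_eq] at hv
    obtain ⟨t, rfl⟩ := Submodule.mem_span_singleton.1 hv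
    rw [← eval_line, h, Polynomial.eval_zero]

lemma idealOf_prime {n : ℕ} {S : Set (Pn n)} (hS : IsIrrVariety n S) : (idealOf S).IsPrime := by
  obtain ⟨⟨p, hp⟩, hirr⟩ := hS
  refine ⟨fun h => ?_, fun {f g} hfg => ?_⟩
  · have h1 : (1 : MvPolynomial (Fin (n + 1)) ℂ) ∈ idealOf S := h ▸ Submodule.mem_top
    simpa using mem_idealOf.1 h1 p hp 0 (Submodule.zero_mem _)
  · have hsub : ∀ f, S ⊆ algZeroLocus n {f} → f ∈ idealOf S := fun f h =>
      mem_idealOf.2 fun p hp v hv => h hp f rfl v hv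
    refine (hirr (algZeroLocus n {f}) (algZeroLocus n {g}) ⟨_, rfl⟩ ⟨_, rfl⟩ ?_).imp
      (hsub f) (hsub g)
    intro z hz
    rw [Set.mem_union, mem_locus_singleton, mem_locus_singleton]
    have : z ∈ algZeroLocus n {f * g} := by
      rintro _ rfl v hv
      exact mem_idealOf.1 hfg z hz v hv
    rw [mem_locus_singleton] at this
    have hmul : polarG (f * g) z.rep = polarG f z.rep * polarG g z.rep := map_mul _ _ _
    rw [hmul, Polynomial.map_mul] at this
    exact mul_eq_zero.1 this

lemma exists_chain {n k : ℕ} {S : Set (Pn n)} (hk : 1 ≤ k) (h : algDim n S = (k : ℕ∞)) :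
    ∃ c : Fin (k + 1) → Set (Pn n),
    StrictMono c ∧ ∀ i, IsAlgClosedSet n (c i) ∧ IsIrrVariety n (c i) ∧ c i ⊆ S := by
  unfold algDim at h
  set A := {m : ℕ∞ | ∃ k : ℕ, m = (k : ℕ∞) ∧ ∃ c : Fin (k + 1) → Set (Pn n),
    StrictMono c ∧ ∀ i, IsAlgClosedSet n (c i) ∧ IsIrrVariety n (c i) ∧ c i ⊆ S} with hA
  have hne : Nonempty A := by
    by_contra hcon
    rw [Set.nonempty_coe_sort, Set.not_nonempty_iff_eq_empty] at hcon
    rw [hcon, sSup_empty, bot_eq_zero] at h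
    have : (0 : ℕ) = k := by exact_mod_cast h
    omega
  have := ENat.sSup_mem_of_nonempty_of_lt_top (s := A) (h ▸ ENat.natCast_lt_top _)
  rw [h] at this
  obtain ⟨k', hk', hc⟩ := this
  obtain rfl : k = k' := by exact_mod_cast hk'
  exact hc

lemma line_sub {n d : ℕ} (F : MvPolynomial (Fin (n + 1)) ℂ) (hF : F.IsHomogeneous d)
    (z p : Pn n) (v : Fin (n + 1) → ℂ) (hz : Projectivization.submodule z = Submodule.span ℂ {v})
    (hv : eval v F = 0) (hp : eval p.rep F = 0)
    (h : ∀ j, 1 ≤ j → j < d → eval v ((polarG F p.rep).coeff j) = 0) :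
    lineThrough n z p ⊆ algZeroLocus n {F} := by
  rintro x hx _ rfl w hw
  have hw' := hx hw
  rw [hz, Projectivization.submodule_eq, Submodule.mem_sup] at hw'
  obtain ⟨_, h1, _, h2, rfl⟩ := hw'
  obtain ⟨a, rfl⟩ := Submodule.mem_span_singleton.1 h1
  obtain ⟨b, rfl⟩ := Submodule.mem_span_singleton.1 h2
  exact polar_line _ hF _ _ hp hv h a b

/-- Let `X ⊂ ℙ^n` be an irreducible hypersurface of degree `d` over `ℂ` and `S ⊆ X` an
irreducible closed subvariety with `dim S = 2d - 1`. Then for any two distinct points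
`p, q ∈ X` there is `z ∈ S`, `z ≠ p`, `z ≠ q`, with both lines `l_{zp}` and `l_{zq}`
contained in `X`. -/
theorem stmt10 (n d : ℕ) (hd : 1 ≤ d) (F : MvPolynomial (Fin (n + 1)) ℂ)
    (hF : F.IsHomogeneous d) (hF0 : F ≠ 0)
    (X : Set (Pn n)) (hX : X = algZeroLocus n {F}) (hXirr : IsIrrVariety n X)
    (S : Set (Pn n)) (hS : S ⊆ X) (hScl : IsAlgClosedSet n S) (hSirr : IsIrrVariety n S)
    (hSdim : algDim n S = ((2 * d - 1 : ℕ) : ℕ∞)) :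
    ∀ p ∈ X, ∀ q ∈ X, p ≠ q →
      ∃ z ∈ S, z ≠ p ∧ z ≠ q ∧ lineThrough n z p ⊆ X ∧ lineThrough n z q ⊆ X := by
  intro p hp q hq hpq
  subst hX
  by_contra hcon
  push Not at hcon
  have hrep : ∀ x : Pn n, x.rep ∈ Projectivization.submodule x := fun x => by
    rw [Projectivization.submodule_eq]; exact Submodule.mem_span_singleton_self _
  have hp0 : eval p.rep F = 0 := hp F rfl _ (hrep p)
  have hq0 : eval q.rep F = 0 := hq F rfl _ (hrep q)
  obtain ⟨c, hc, hcp⟩ := exists_chain (by omega) hSdim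
  obtain ⟨l, hl, hlp, hlq⟩ := exists_lin p.rep q.rep p.rep_nonzero q.rep_nonzero
  let s1 : Set (MvPolynomial (Fin (n + 1)) ℂ) :=
    (fun j => (polarG F p.rep).coeff j) '' (Finset.Ico 1 d : Set ℕ)
  let s2 : Set (MvPolynomial (Fin (n + 1)) ℂ) :=
    (fun j => (polarG F q.rep).coeff j) '' (Finset.Ico 1 d : Set ℕ)
  let s : Set (MvPolynomial (Fin (n + 1)) ℂ) := insert l (s1 ∪ s2)
  have hf1 : s1.Finite := (Finset.finite_toSet _).image _
  have hf2 : s2.Finite := (Finset.finite_toSet _).image _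
  have hsf : s.Finite := (hf1.union hf2).insert _
  have hcard : s.ncard ≤ (d - 1) + (d - 1) + 1 := by
    refine (Set.ncard_insert_le _ _).trans ?_
    gcongr
    refine (Set.ncard_union_le _ _).trans ?_
    have : (Finset.Ico 1 d : Set ℕ).ncard = d - 1 := by
      rw [Set.ncard_coe_finset, Nat.card_Ico]
    gcongr
    · exact (Set.ncard_image_le (Finset.finite_toSet _)).trans this.le
    · exact (Set.ncard_image_le (Finset.finite_toSet _)).trans this.le
  let M : Ideal (MvPolynomial (Fin (n + 1)) ℂ) := vanishingIdeal ℂ {(0 : Fin (n + 1) → ℂ)}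
  have hMmem : ∀ f, f ∈ M ↔ eval 0 f = 0 := fun f => by
    rw [mem_vanishingIdeal_singleton_iff, aeval_eq_eval]
  have hIM : ∀ i, idealOf (c i) ≤ M := fun i f hf => by
    obtain ⟨x, hx⟩ := (hcp i).2.1.1
    exact (hMmem f).2 (mem_idealOf.1 hf x hx 0 (Submodule.zero_mem _))
  have h0 : idealOf (c 0) < M := by
    refine lt_of_le_not_ge (hIM 0) fun hle => ?_
    obtain ⟨x, hx⟩ := (hcp 0).2.1.1
    obtain ⟨i, hi⟩ := Function.ne_iff.1 x.rep_nonzero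
    have h1 : (X i : MvPolynomial (Fin (n + 1)) ℂ) ∈ M := (hMmem _).2 (by simp)
    have := mem_idealOf.1 (hle h1) x hx _ (hrep x)
    rw [eval_X] at this
    exact hi this
  have hsM : s ⊆ M := by
    rintro f (rfl | ⟨j, -, rfl⟩ | ⟨j, -, rfl⟩)
    · refine (hMmem _).2 ?_
      have := eval_smul_hom f hl 0 0
      simpa using this
    · exact (hMmem _).2 (polar_zero F hF _ hp0 j)
    · exact (hMmem _).2 (polar_zero F hF _ hq0 j)
  set I := idealOf (c (Fin.last _)) with hI
  have hzero : zeroLocus ℂ (I ⊔ Ideal.span s) ⊆ {(0 : Fin (n + 1) → ℂ)} := by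
    intro v hv
    by_contra hv0
    have hv0 : v ≠ 0 := hv0
    have hvI : ∀ f ∈ I, eval v f = 0 := fun f hf => by
      have := hv f (Ideal.mem_sup_left hf)
      rwa [aeval_eq_eval] at this
    have hvs : ∀ f ∈ s, eval v f = 0 := fun f hf => by
      have := hv f (Ideal.mem_sup_right (Ideal.subset_span hf))
      rwa [aeval_eq_eval] at this
    let z : Pn n := Projectivization.mk ℂ v hv0
    have hz : Projectivization.submodule z = Submodule.span ℂ {v} :=
      Projectivization.submodule_mk v hv0
    have hvz : v ∈ Projectivization.submodule z := by
      rw [hz]; exact Submodule.mem_span_singleton_self _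
    have hzc : z ∈ c (Fin.last _) := by
      refine algZeroLocus_of_closed (hcp _).1 z fun f hf w hw => ?_
      rw [hz] at hw
      obtain ⟨a, rfl⟩ := Submodule.mem_span_singleton.1 hw
      have := hvI _ (idealOf_scale (mem_idealOf.2 hf) a)
      rwa [eval_scale] at this
    have hzS : z ∈ S := (hcp _).2.2 hzc
    have hvF : eval v F = 0 := hS hzS F rfl v hvz
    have hlv : eval v l = 0 := hvs l (Set.mem_insert _ _)
    have hne : ∀ x : Pn n, eval x.rep l ≠ 0 → z ≠ x := by
      rintro x hx rfl
      apply hx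
      have := hrep z
      rw [hz] at this
      obtain ⟨a, ha⟩ := Submodule.mem_span_singleton.1 this
      rw [← ha, eval_smul_hom l hl, hlv, mul_zero]
    refine hcon z hzS (hne p hlp) (hne q hlq) ?_ ?_
    · refine line_sub F hF z p v hz hvF hp0 fun j h1 h2 => hvs _ ?_
      exact Or.inr (Or.inl ⟨j, by simp [h1, h2], rfl⟩)
    · refine line_sub F hF z q v hz hvF hq0 fun j h1 h2 => hvs _ ?_
      exact Or.inr (Or.inr ⟨j, by simp [h1, h2], rfl⟩)
  have hrad : M ≤ (I ⊔ Ideal.span s).radical := by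
    rw [← vanishingIdeal_zeroLocus_eq_radical (K := ℂ)]
    exact vanishingIdeal_anti_mono hzero
  have hmin : M ∈ (I ⊔ Ideal.span s).minimalPrimes := by
    refine ⟨⟨inferInstance, sup_le (hIM _) (Ideal.span_le.2 hsM)⟩, ?_⟩
    rintro J ⟨hJ, hJI⟩ -
    exact hrad.trans (hJ.radical_le_iff.2 hJI)
  have := krull_chain_s10 M s hsf _ (fun i => idealOf (c i))
    (fun i j hij => idealOf_strict (hcp i).1 (hc hij)) (fun i => idealOf_prime (hcp i).2.1) h0 hmin
  omega
end
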